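/- arXiv:1812.00830 — 2 statements merged into one kernel-verified Lean document; each statement's English description precedes it below -/
import Mathlib

section
/- Let k be a field, let m ≥ 2 and n ≥ 2, and let R = k[X₁,…,X_m]/(X₁,…,X_m)ⁿ, the quotient of the polynomial ring in m variables by the n-th power of the ideal generated by the variables. Then every reflexive R-module is finitely generated and free. -/
/-- The ring `R = k[X₁,…,X_m]/(X₁,…,X_m)ⁿ`. -/
abbrev TruncPolyRing (k : Type u) [Field k] (m n : ℕ) : Type u :=
  MvPolynomial (Fin m) k ⧸
    ((Ideal.span (Set.range MvPolynomial.X) : Ideal (MvPolynomial (Fin m) k)) ^ n)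

/-!
Let `I = (X₁,…,X_m)` and let `𝔪` be its image in `R`. Any `w ∈ M` outside `𝔪M` is sent to any
prescribed socle element by some functional. As `X₂ⁿ⁻¹` is a socle element outside `(X₁)`, a vector
on which all functionals take values in `(X₁)` lies in `𝔪M`. Hence, if `M` is reflexive, a
functional `t` on `N = M*` with values in `(X₁)` lies in `𝔪N*`.

Choose minimal generators `eⱼ` of `N`. If the coefficients of all relations lie in `𝔪ᵖ` with
`1 ≤ p < n`, there is a functional `t` with `t(eⱼ) = X₁ⁿ⁻ᵖ` for one index `j` and `0` for the
others. Since `t ∈ 𝔪N*`, pairing `t` with a relation `d`, after lifting to the polynomial ring,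
gives a value in `Iⁿ⁺¹` and not only in `Iⁿ`. That value is `dⱼ X₁ⁿ⁻ᵖ`, so `dⱼ ∈ 𝔪ᵖ⁺¹`. By
induction all relations vanish: `N` is free, `N ≅ R^(J)`. As `N` is reflexive, `J` is finite:
otherwise some functional on `R^J` vanishes on `R^(J)` but not at the constant vector `1`. Hence
`M ≅ N*` is free of finite rank.
-/

open Module

section SocleElement

variable {R M : Type*} [CommRing R] [AddCommGroup M] [Module R M]
  {𝔪 : Ideal R} [𝔪.IsMaximal] {τ : R}

lemma exists_dual_apply_eq_of_notMem_smul_top (hτ : ∀ a ∈ 𝔪, a * τ = 0) {w : M}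
    (hw : w ∉ 𝔪 • (⊤ : Submodule R M)) : ∃ f : Dual R M, f w = τ := by
  let _ : Field (R ⧸ 𝔪) := Ideal.Quotient.field 𝔪
  have hw' : (𝔪 • (⊤ : Submodule R M)).mkQ w ≠ 0 :=
    fun h => hw ((Submodule.Quotient.mk_eq_zero _).1 h)
  obtain ⟨φ, hφ⟩ := Projective.exists_dual_eq_one (R ⧸ 𝔪) hw'
  let s : (R ⧸ 𝔪) →ₗ[R] R := Submodule.liftQ 𝔪 (LinearMap.toSpanSingleton R R τ) hτ
  have hs : s 1 = τ := one_mul τ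
  exact ⟨s ∘ₗ φ.restrictScalars R ∘ₗ (𝔪 • (⊤ : Submodule R M)).mkQ, by
    simp only [LinearMap.comp_apply, LinearMap.restrictScalars_apply, hφ, hs]⟩

lemma mem_smul_top_of_forall_dual_apply_mem (hτ : ∀ a ∈ 𝔪, a * τ = 0) {𝔞 : Ideal R}
    (hτ𝔞 : τ ∉ 𝔞) {w : M} (hw : ∀ f : Dual R M, f w ∈ 𝔞) :
    w ∈ 𝔪 • (⊤ : Submodule R M) := by
  by_contra hmem
  obtain ⟨f, rfl⟩ := exists_dual_apply_eq_of_notMem_smul_top hτ hmem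
  exact hτ𝔞 (hw f)

lemma mkQ_range_lcoeFun_one_notMem_smul_top {J : Type*} [Infinite J] {𝔞 : Ideal R} (h𝔞 : 𝔞 ≠ ⊤) :
    Submodule.mkQ (LinearMap.range (Finsupp.lcoeFun : (J →₀ R) →ₗ[R] J → R)) 1 ∉
      𝔞 • (⊤ : Submodule R ((J → R) ⧸ LinearMap.range Finsupp.lcoeFun)) := by
  intro h
  set S : Submodule R (J → R) := LinearMap.range Finsupp.lcoeFun
  rw [← Submodule.range_mkQ S, LinearMap.range_eq_map, ← Submodule.map_smul''] at h
  obtain ⟨v, hv, hv1⟩ := h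
  obtain ⟨c, hc⟩ : v - 1 ∈ S := (Submodule.Quotient.eq S).1 hv1
  obtain ⟨j, hj⟩ := Infinite.exists_notMem_finset c.support
  have hvj : v j = 1 := by
    have := congrFun hc j
    rw [Finsupp.lcoeFun_apply, Finsupp.notMem_support_iff.1 hj] at this
    exact (sub_eq_zero.1 this.symm)
  have hmem : v j ∈ 𝔞 := by
    have := Submodule.smul_top_le_comap_smul_top 𝔞
      (LinearMap.proj j : (J → R) →ₗ[R] R) hv
    simpa using this
  exact h𝔞 ((Ideal.eq_top_iff_one 𝔞).2 (hvj ▸ hmem))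

lemma finite_of_isReflexive_finsupp (hτ : ∀ a ∈ 𝔪, a * τ = 0) (hτ0 : τ ≠ 0) (J : Type*)
    [IsReflexive R (J →₀ R)] : Finite J := by
  by_contra hJ
  have : Infinite J := not_finite_iff_infinite.1 hJ
  obtain ⟨f, hf⟩ := exists_dual_apply_eq_of_notMem_smul_top hτ
    (mkQ_range_lcoeFun_one_notMem_smul_top (J := J) (Ideal.IsMaximal.ne_top (I := 𝔪) inferInstance))
  let g : Dual R (J → R) := f ∘ₗ Submodule.mkQ _
  have hg : ∀ c : J →₀ R, g c = 0 := fun c => by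
    have hc : Submodule.mkQ (LinearMap.range (Finsupp.lcoeFun (R := R))) (c : J → R) = 0 :=
      (Submodule.Quotient.mk_eq_zero _).2 ⟨c, rfl⟩
    rw [LinearMap.comp_apply, hc, map_zero]
  let values : Dual R (J →₀ R) →ₗ[R] J → R :=
    LinearMap.pi fun j => Dual.eval R (J →₀ R) (Finsupp.single j 1)
  obtain ⟨d, hd⟩ := (bijective_dual_eval R (J →₀ R)).2 (g ∘ₗ values)
  have hd0 : d = 0 := by
    classical
    ext j
    have hval : values (Finsupp.lapply j) = Finsupp.single j (1 : R) := by
      ext i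
      simp [values, Finsupp.single_apply, eq_comm]
    simpa [hval, hg] using LinearMap.congr_fun hd (Finsupp.lapply j)
  have hsum : values (Finsupp.linearCombination R fun _ => (1 : R)) = 1 := by
    ext j
    simp [values]
  apply hτ0
  calc τ = (g ∘ₗ values) (Finsupp.linearCombination R fun _ => (1 : R)) := by
        rw [LinearMap.comp_apply, hsum]; exact hf.symm
    _ = 0 := by rw [← hd, hd0, map_zero, LinearMap.zero_apply]

end SocleElement

section Relations

universe v

variable {R N J : Type*} [CommRing R] [AddCommGroup N] [Module R N]

variable (R) in
/-- The ideal generated by all coefficients of linear relations among the `e j`. When `e` is a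
generating family, its being contained in a maximal ideal says that `e` is minimal there, and its
vanishing says that `e` is a basis. -/
def relationIdeal (e : J → N) : Ideal R :=
  Ideal.span {a | ∃ d : J →₀ R, Finsupp.linearCombination R e d = 0 ∧ ∃ j, d j = a}

lemma relationIdeal_le_iff {e : J → N} {𝔞 : Ideal R} :
    relationIdeal R e ≤ 𝔞 ↔
      ∀ d : J →₀ R, Finsupp.linearCombination R e d = 0 → ∀ j, d j ∈ 𝔞 := by
  rw [relationIdeal, Ideal.span_le]
  exact ⟨fun h d hd j => h ⟨d, hd, j, rfl⟩, by rintro h _ ⟨d, hd, j, rfl⟩; exact h d hd j⟩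

lemma linearIndependent_of_relationIdeal_eq_bot {e : J → N} (h : relationIdeal R e = ⊥) :
    LinearIndependent R e :=
  linearIndependent_iff.2 fun d hd =>
    Finsupp.ext fun j => Ideal.mem_bot.1 (relationIdeal_le_iff.1 h.le d hd j)

lemma eq_top_of_sup_smul_top_eq_top {𝔞 : Ideal R} (h𝔞 : IsNilpotent 𝔞) {L : Submodule R N}
    (hL : L ⊔ 𝔞 • (⊤ : Submodule R N) = ⊤) : L = ⊤ := by
  have hpow : ∀ i : ℕ, L ⊔ 𝔞 ^ i • (⊤ : Submodule R N) = ⊤ := by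
    intro i
    induction i with
    | zero => simp
    | succ i ih =>
      rw [eq_top_iff]
      calc (⊤ : Submodule R N) = L ⊔ 𝔞 • (L ⊔ 𝔞 ^ i • (⊤ : Submodule R N)) := by rw [ih, hL]
        _ = L ⊔ (𝔞 • L ⊔ 𝔞 ^ (i + 1) • (⊤ : Submodule R N)) := by
          rw [Submodule.smul_sup, pow_succ', Submodule.mul_smul]
        _ ≤ L ⊔ 𝔞 ^ (i + 1) • (⊤ : Submodule R N) :=
          sup_le le_sup_left (sup_le (le_sup_of_le_left Submodule.smul_le_right) le_sup_right)
  obtain ⟨n, hn⟩ := h𝔞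
  simpa [hn] using hpow n

lemma exists_span_eq_top_relationIdeal_le {R : Type*} {N : Type v} [CommRing R] [AddCommGroup N]
    [Module R N] {𝔪 : Ideal R} [𝔪.IsMaximal] (h𝔪 : IsNilpotent 𝔪) :
    ∃ (J : Type v) (e : J → N), Submodule.span R (Set.range e) = ⊤ ∧ relationIdeal R e ≤ 𝔪 := by
  let _ : Field (R ⧸ 𝔪) := Ideal.Quotient.field 𝔪
  let π := (𝔪 • (⊤ : Submodule R N)).mkQ
  let b := Basis.ofVectorSpace (R ⧸ 𝔪) (N ⧸ 𝔪 • (⊤ : Submodule R N))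
  choose e he using fun j => Submodule.mkQ_surjective (𝔪 • (⊤ : Submodule R N)) (b j)
  refine ⟨_, e, eq_top_of_sup_smul_top_eq_top h𝔪 ?_, relationIdeal_le_iff.2 fun d hd j => ?_⟩
  · have hb : Submodule.span R (Set.range b) = ⊤ := by
      rw [← Submodule.restrictScalars_span R (R ⧸ 𝔪) Ideal.Quotient.mk_surjective, b.span_eq,
        Submodule.restrictScalars_top]
    have hπe : (Submodule.span R (Set.range e)).map π = ⊤ := by
      rw [Submodule.map_span, ← Set.range_comp, ← hb]
      exact congrArg _ (congrArg _ (funext he))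
    have hcomap := Submodule.comap_map_eq π (Submodule.span R (Set.range e))
    rw [hπe, Submodule.comap_top, Submodule.ker_mkQ] at hcomap
    exact hcomap.symm
  · have hdb : Finsupp.linearCombination (R ⧸ 𝔪) b
        (d.mapRange (Ideal.Quotient.mk 𝔪) (map_zero _)) = 0 := by
      rw [Finsupp.linearCombination_apply,
        Finsupp.sum_mapRange_index (h := fun j a => a • b j) fun _ => zero_smul _ _,
        ← map_zero π, ← hd, Finsupp.linearCombination_apply, map_finsuppSum]
      exact Finsupp.sum_congr fun j _ => by rw [← he, map_smul]; rfl
    have hd0 := linearIndependent_iff.1 b.linearIndependent _ hdb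
    exact Ideal.Quotient.eq_zero_iff_mem.1 (DFunLike.congr_fun hd0 j)

lemma exists_dual_apply_eq_single [DecidableEq J] {e : J → N}
    (he : Submodule.span R (Set.range e) = ⊤) (i : J) {c : R}
    (hc : ∀ a ∈ relationIdeal R e, c * a = 0) :
    ∃ t : Dual R N, (∀ j, t (e j) = if j = i then c else 0) ∧ ∀ v, t v ∈ Ideal.span {c} := by
  let π := Finsupp.linearCombination R e
  have hπ : Function.Surjective π := by
    rw [← LinearMap.range_eq_top, Finsupp.range_linearCombination, he]
  have hker : LinearMap.ker π ≤ LinearMap.ker (c • Finsupp.lapply i : (J →₀ R) →ₗ[R] R) :=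
    fun d hd => hc _ (relationIdeal_le_iff.1 le_rfl d hd i)
  let t : Dual R N := (LinearMap.ker π).liftQ _ hker ∘ₗ (π.quotKerEquivOfSurjective hπ).symm
  have ht : ∀ d, t (π d) = c * d i := fun d => by
    simp only [t, LinearMap.comp_apply, LinearEquiv.coe_coe,
      LinearMap.quotKerEquivOfSurjective_symm_apply]
    rfl
  refine ⟨t, fun j => ?_, fun v => ?_⟩
  · have hj : e j = π (Finsupp.single j 1) := by simp [π]
    rw [hj, ht, Finsupp.single_apply, mul_ite, mul_one, mul_zero]
  · obtain ⟨d, rfl⟩ := hπ v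
    rw [ht]
    exact Ideal.mul_mem_right _ _ (Ideal.mem_span_singleton_self c)

end Relations

section TruncatedRing

variable {P : Type*} [CommRing P] {I : Ideal P} {n : ℕ}

/-- `x ∈ I` has degree-one initial form which is a nonzerodivisor in the associated graded ring
`⨁ Iᵇ/Iᵇ⁺¹`, encoded by the equivalent condition `(Iᵇ⁺¹ : x) = Iᵇ` for all `b`. -/
structure IsInitialRegular (I : Ideal P) (x : P) : Prop where
  mem : x ∈ I
  mem_pow_of_mul_mem : ∀ (f : P) (b : ℕ), f * x ∈ I ^ (b + 1) → f ∈ I ^ b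

lemma IsInitialRegular.mem_pow_of_mul_pow_mem {x : P} (hx : IsInitialRegular I x) {f : P} (a : ℕ)
    {b : ℕ} (h : f * x ^ a ∈ I ^ (b + a)) : f ∈ I ^ b := by
  induction a with
  | zero => simpa using h
  | succ a ih => exact ih (hx.mem_pow_of_mul_mem _ _ (by rwa [mul_assoc, ← pow_succ]))

variable {R : Type*} [CommRing R] {q : P →+* R}

lemma map_mem_map_pow_iff (hq : Function.Surjective q) (hker : RingHom.ker q = I ^ n) {p : ℕ}
    (hp : p ≤ n) {f : P} : q f ∈ I.map q ^ p ↔ f ∈ I ^ p := by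
  rw [← Ideal.map_pow, ← Ideal.mem_comap, Ideal.comap_map_of_surjective' _ hq, hker,
    sup_eq_left.2 (Ideal.pow_le_pow_right hp)]

lemma map_pow_eq_bot_of_ker_eq (hker : RingHom.ker q = I ^ n) : I.map q ^ n = ⊥ := by
  rw [← Ideal.map_pow, Ideal.map_eq_bot_iff_le_ker, hker]

lemma mul_map_eq_zero_of_mem (hker : RingHom.ker q = I ^ n) (hn : n ≠ 0) {y : P}
    (hy : y ∈ I ^ (n - 1)) {a : R} (ha : a ∈ I.map q) : a * q y = 0 := by
  have hmem := Ideal.mul_mem_mul ha (Ideal.mem_map_of_mem q hy)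
  rwa [Ideal.map_pow, mul_pow_sub_one hn, map_pow_eq_bot_of_ker_eq hker, Ideal.mem_bot] at hmem

variable {N : Type*} [AddCommGroup N] [Module R N]

-- For a general functional `t` the sum is only in `I ^ n`; being in `𝔪N*` gains one power.
lemma sum_mul_mem_pow_succ_of_mem_smul_top (hq : Function.Surjective q)
    (hker : RingHom.ker q = I ^ n) {J : Type*} {e : J → N} {s : Finset J} {D U : J → P}
    (hDI : ∀ j, D j ∈ I) (hD : ∑ j ∈ s, q (D j) • e j = 0) {t : Dual R N}
    (ht : t ∈ I.map q • (⊤ : Submodule R (Dual R N))) (hU : ∀ j, q (U j) = t (e j)) :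
    ∑ j ∈ s, D j * U j ∈ I ^ (n + 1) := by
  induction ht using Submodule.smul_induction_on' generalizing U with
  | smul a ha f _ =>
    obtain ⟨A, hA, rfl⟩ := (Ideal.mem_map_iff_of_surjective q hq).1 ha
    choose W hW using fun j => hq (f (e j))
    have hDW : ∑ j ∈ s, D j * W j ∈ I ^ n := by
      rw [← hker, RingHom.mem_ker]
      simpa [hW] using congrArg f hD
    have hUW : ∀ j, U j - A * W j ∈ I ^ n := fun j => by
      rw [← hker, RingHom.mem_ker, map_sub, map_mul, hU, hW, LinearMap.smul_apply, smul_eq_mul,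
        sub_self]
    have hsplit : ∑ j ∈ s, D j * U j =
        A * ∑ j ∈ s, D j * W j + ∑ j ∈ s, D j * (U j - A * W j) := by
      rw [Finset.mul_sum, ← Finset.sum_add_distrib]
      exact Finset.sum_congr rfl fun j _ => by ring
    rw [hsplit, pow_succ']
    exact add_mem (Ideal.mul_mem_mul hA hDW)
      (Ideal.sum_mem _ fun j _ => Ideal.mul_mem_mul (hDI j) (hUW j))
  | add f _ g _ hf hg =>
    choose V hV using fun j => hq (f (e j))
    have hUV : ∀ j, q (U j - V j) = g (e j) := fun j => by
      rw [map_sub, hU, hV, LinearMap.add_apply, add_sub_cancel_left]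
    simpa [mul_sub] using add_mem (hf hV) (hg hUV)

lemma relationIdeal_le_pow_succ (hq : Function.Surjective q) (hker : RingHom.ker q = I ^ n)
    {x : P} (hx : IsInitialRegular I x)
    (hdual : ∀ t : Dual R N, (∀ v, t v ∈ Ideal.span {q x}) →
      t ∈ I.map q • (⊤ : Submodule R (Dual R N)))
    {J : Type*} {e : J → N} (he : Submodule.span R (Set.range e) = ⊤) {p : ℕ} (hp : p ≠ 0)
    (hpn : p < n) (hrel : relationIdeal R e ≤ I.map q ^ p) :
    relationIdeal R e ≤ I.map q ^ (p + 1) := by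
  classical
  refine relationIdeal_le_iff.2 fun d hd i => ?_
  choose D hD using fun j => hq (d j)
  have hDI : ∀ j, D j ∈ I ^ p := fun j => by
    rw [← map_mem_map_pow_iff hq hker hpn.le, hD]
    exact relationIdeal_le_iff.1 hrel d hd j
  have hxn : ∀ a ∈ relationIdeal R e, q (x ^ (n - p)) * a = 0 := fun a ha => by
    have hmem := Ideal.mul_mem_mul
      (Ideal.mem_map_of_mem q (Ideal.pow_mem_pow hx.mem (n - p))) (hrel ha)
    rwa [Ideal.map_pow, ← pow_add, Nat.sub_add_cancel hpn.le, map_pow_eq_bot_of_ker_eq hker,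
      Ideal.mem_bot] at hmem
  obtain ⟨t, hte, ht⟩ := exists_dual_apply_eq_single he i hxn
  have ht𝔪 : t ∈ I.map q • (⊤ : Submodule R (Dual R N)) := hdual t fun v => by
    refine (Ideal.span_singleton_le_iff_mem _).2 ?_ (ht v)
    rw [map_pow]
    exact Ideal.pow_mem_of_mem _ (Ideal.mem_span_singleton_self _) _ (Nat.sub_pos_of_lt hpn)
  have hsum : ∑ j ∈ insert i d.support, D j * (if j = i then x ^ (n - p) else 0) ∈ I ^ (n + 1) := by
    refine sum_mul_mem_pow_succ_of_mem_smul_top hq hker (fun j => Ideal.pow_le_self hp (hDI j)) ?_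
      ht𝔪 fun j => by rw [hte, apply_ite q, map_zero]
    simp only [hD]
    rw [Finset.sum_insert_of_eq_zero_if_notMem fun hi => by
      rw [Finsupp.notMem_support_iff.1 hi, zero_smul]]
    rwa [Finsupp.linearCombination_apply] at hd
  rw [← hD, map_mem_map_pow_iff hq hker hpn]
  refine hx.mem_pow_of_mul_pow_mem (n - p) ?_
  rw [show p + 1 + (n - p) = n + 1 by omega]
  simpa using hsum

lemma free_of_forall_dual_mem_smul_top (hq : Function.Surjective q)
    (hker : RingHom.ker q = I ^ n) (hn : n ≠ 0) [(I.map q).IsMaximal] {x : P}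
    (hx : IsInitialRegular I x)
    (hdual : ∀ t : Dual R N, (∀ v, t v ∈ Ideal.span {q x}) →
      t ∈ I.map q • (⊤ : Submodule R (Dual R N))) :
    Module.Free R N := by
  have hnil := map_pow_eq_bot_of_ker_eq hker
  obtain ⟨J, e, he, hrel⟩ := exists_span_eq_top_relationIdeal_le (N := N) ⟨n, hnil⟩
  have hpow : ∀ p, 1 ≤ p → p ≤ n → relationIdeal R e ≤ I.map q ^ p := by
    intro p hp
    induction p, hp using Nat.le_induction with
    | base => exact fun _ => (pow_one (I.map q)).symm ▸ hrel
    | succ p hp ih =>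
      exact fun hpn => relationIdeal_le_pow_succ hq hker hx hdual he (Nat.one_le_iff_ne_zero.1 hp)
        hpn (ih (Nat.le_of_succ_le hpn))
  have hbot : relationIdeal R e = ⊥ :=
    eq_bot_iff.2 (hnil ▸ hpow n (Nat.one_le_iff_ne_zero.2 hn) le_rfl)
  exact .of_basis (.mk (linearIndependent_of_relationIdeal_eq_bot hbot) he.ge)

theorem finite_and_free_of_isReflexive (hq : Function.Surjective q)
    (hker : RingHom.ker q = I ^ n) (hn : n ≠ 0) [I.IsMaximal] {x y : P}
    (hx : IsInitialRegular I x) (hy : y ∈ I ^ (n - 1)) (hyx : q y ∉ Ideal.span {q x})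
    (M : Type*) [AddCommGroup M] [Module R M] [IsReflexive R M] :
    Module.Finite R M ∧ Module.Free R M := by
  have : (I.map q).IsMaximal :=
    Ideal.IsMaximal.map_of_surjective_of_ker_le hq (hker ▸ Ideal.pow_le_self hn)
  have hsocle : ∀ a ∈ I.map q, a * q y = 0 := fun a => mul_map_eq_zero_of_mem hker hn hy
  have hfree : Module.Free R (Dual R M) := by
    refine free_of_forall_dual_mem_smul_top hq hker hn hx fun t ht => ?_
    refine mem_smul_top_of_forall_dual_apply_mem hsocle hyx fun f => ?_
    obtain ⟨w, rfl⟩ := (bijective_dual_eval R M).2 t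
    exact ht (f ∘ₗ Dual.eval R M)
  let b := Free.chooseBasis R (Dual R M)
  have := equiv b.repr
  have hy0 : q y ≠ 0 := fun h0 => hyx (h0 ▸ zero_mem _)
  have := finite_of_isReflexive_finsupp hsocle hy0 (Free.ChooseBasisIndex R (Dual R M))
  have := Module.Finite.of_basis b
  exact ⟨.equiv (evalEquiv R M).symm, .of_equiv (evalEquiv R M).symm⟩

end TruncatedRing

section MvPolynomial

open MvPolynomial

variable {σ k : Type*}

lemma isInitialRegular_X [CommRing k] (i : σ) : IsInitialRegular (idealOfVars σ k) (X i) where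
  mem := Ideal.subset_span ⟨i, rfl⟩
  mem_pow_of_mul_mem f b h := by
    rw [mem_pow_idealOfVars_iff'] at h ⊢
    intro d hd
    rw [← coeff_mul_X]
    exact h _ (by simpa using hd)

lemma idealOfVars_eq_ker_constantCoeff [CommRing k] :
    idealOfVars σ k = RingHom.ker (constantCoeff (R := k) (σ := σ)) := by
  ext f
  rw [← pow_one (idealOfVars σ k), mem_pow_idealOfVars_iff', RingHom.mem_ker]
  simp [Finsupp.degree_eq_zero_iff, constantCoeff_eq]

lemma isMaximal_idealOfVars [Field k] : (idealOfVars σ k).IsMaximal := by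
  rw [idealOfVars_eq_ker_constantCoeff]
  exact RingHom.ker_isMaximal_of_surjective _ fun c => ⟨C c, constantCoeff_C _ c⟩

lemma mk_X_pow_notMem_span_mk_X [CommRing k] [Nontrivial k] {i j : σ} (hij : i ≠ j) {a n : ℕ}
    (han : a < n) :
    Ideal.Quotient.mk (idealOfVars σ k ^ n) (X j ^ a) ∉
      Ideal.span {Ideal.Quotient.mk (idealOfVars σ k ^ n) (X i)} := by
  classical
  intro h
  obtain ⟨r, hr⟩ := Ideal.mem_span_singleton'.1 h
  obtain ⟨f, rfl⟩ := Ideal.Quotient.mk_surjective r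
  rw [← map_mul, Ideal.Quotient.eq, mem_pow_idealOfVars_iff'] at hr
  have hcoeff := hr (Finsupp.single j a) (by rwa [Finsupp.degree_single])
  rw [coeff_sub, coeff_mul_X', coeff_X_pow] at hcoeff
  simp [hij] at hcoeff

end MvPolynomial

theorem stmt4_general {σ k : Type*} [Nontrivial σ] [Field k] (n : ℕ) (M : Type*) [AddCommGroup M]
    [Module (MvPolynomial σ k ⧸ MvPolynomial.idealOfVars σ k ^ n) M]
    [IsReflexive (MvPolynomial σ k ⧸ MvPolynomial.idealOfVars σ k ^ n) M] :
    Module.Finite (MvPolynomial σ k ⧸ MvPolynomial.idealOfVars σ k ^ n) M ∧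
      Module.Free (MvPolynomial σ k ⧸ MvPolynomial.idealOfVars σ k ^ n) M := by
  obtain rfl | hn := eq_or_ne n 0
  · have : Subsingleton (MvPolynomial σ k ⧸ MvPolynomial.idealOfVars σ k ^ 0) :=
      Ideal.Quotient.subsingleton_iff.2 <| by rw [pow_zero, Ideal.one_eq_top]
    have := Module.subsingleton (MvPolynomial σ k ⧸ MvPolynomial.idealOfVars σ k ^ 0) M
    exact ⟨inferInstance, inferInstance⟩
  obtain ⟨i, j, hij⟩ := exists_pair_ne σ
  have := isMaximal_idealOfVars (σ := σ) (k := k)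
  exact finite_and_free_of_isReflexive Ideal.Quotient.mk_surjective Ideal.mk_ker hn
    (isInitialRegular_X i)
    (Ideal.pow_mem_pow (isInitialRegular_X j).mem (n - 1))
    (mk_X_pow_notMem_span_mk_X hij (Nat.sub_one_lt hn)) M

/-- Let `k` be a field, `m ≥ 2`, `n ≥ 2`, and
`R = k[X₁,…,X_m]/(X₁,…,X_m)ⁿ`. Then every reflexive `R`-module is finitely generated
and free. -/
theorem stmt4 (k : Type u) [Field k] (m n : ℕ) (hm : 2 ≤ m) (hn : 2 ≤ n)
    (M : Type u) [AddCommGroup M] [Module (TruncPolyRing k m n) M]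
    (h : Module.IsReflexive (TruncPolyRing k m n) M) :
    Module.Finite (TruncPolyRing k m n) M ∧ Module.Free (TruncPolyRing k m n) M := by
  have : Nontrivial (Fin m) := Fin.nontrivial_iff_two_le.2 hm
  exact stmt4_general n M
end

section
/- Let R = ℚ[X,Y]/(X², XY, Y³). Then every reflexive R-module is finitely generated and free. -/
/-- The ring `R = ℚ[X,Y]/(X², XY, Y³)`. -/
abbrev RamrasRing : Type :=
  MvPolynomial (Fin 2) ℚ ⧸
    (Ideal.span {MvPolynomial.X 0 ^ 2,
        MvPolynomial.X 0 * MvPolynomial.X 1,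
        MvPolynomial.X 1 ^ 3} : Ideal (MvPolynomial (Fin 2) ℚ))

/-!
Let `R` be a local ring with nilpotent maximal ideal `𝔪 = I ⊕ J`, where `I` is a minimal ideal and
`J ≠ 0`, and let `k` be the residue field. Embedding `k` in `R` as `I` turns a linear form
`φ : M* → k` into an element of `M**`, that is, when `M` is reflexive, into some `e : M` with
`f e = φ f ∈ I` for all `f`. As `J` contains another copy of `k`, this forces `e ∈ 𝔪M = IM + JM`;
comparing components in `I ⊕ J` yields `u : M` with `φ f = f u` modulo `𝔪`. Applied to `M` and to
the reflexive module `M*`, this shows that `M / 𝔪M` is reflexive over `k`, hence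
finite-dimensional, and that its linear forms lift to `M`. Lifting the coordinates of a basis gives
a map from `M` to a finite free module which is bijective by Nakayama's lemma.
In `ℚ[X,Y]/(X², XY, Y³)` take `I = (X)` and `J = (Y)`.
-/

open IsLocalRing Module TensorProduct

section Nakayama

variable {R M N : Type*} [CommRing R] [AddCommGroup M] [Module R M] [AddCommGroup N] [Module R N]

lemma eq_bot_of_le_smul_of_isNilpotent {I : Ideal R} (hI : IsNilpotent I) {P : Submodule R M}
    (hP : P ≤ I • P) : P = ⊥ := by
  obtain ⟨n, hn⟩ := hI
  have le_pow_smul : ∀ m : ℕ, P ≤ I ^ m • P := fun m ↦ by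
    induction m with
    | zero => simp
    | succ m ih =>
      rw [pow_succ, Submodule.mul_smul]
      exact ih.trans (smul_mono_right _ hP)
  simpa [hn] using le_pow_smul n

lemma injective_of_ker_le_smul_top [Projective R N] {I : Ideal R} (hI : IsNilpotent I)
    {F : M →ₗ[R] N} (hF : Function.Surjective F) (hker : LinearMap.ker F ≤ I • ⊤) :
    Function.Injective F := by
  obtain ⟨G, hFG⟩ := projective_lifting_property F LinearMap.id hF
  let π : M →ₗ[R] M := LinearMap.id - G ∘ₗ F
  have range_π_le : LinearMap.range π ≤ LinearMap.ker F := by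
    rintro _ ⟨v, rfl⟩
    simpa [π, sub_eq_zero] using (LinearMap.congr_fun hFG (F v)).symm
  have le_smul_ker : LinearMap.ker F ≤ I • LinearMap.ker F := fun v hv ↦ by
    have hπv : π v = v := by simp [π, LinearMap.mem_ker.mp hv]
    have : π v ∈ (I • ⊤ : Submodule R M).map π := Submodule.mem_map_of_mem (hker hv)
    rw [Submodule.map_smul'', Submodule.map_top, hπv] at this
    exact smul_mono_right I range_π_le this
  exact LinearMap.ker_eq_bot.mp (eq_bot_of_le_smul_of_isNilpotent hI le_smul_ker)

lemma surjective_of_surjective_residue_comp [IsLocalRing R] {ι : Type*} [Finite ι]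
    {F : M →ₗ[R] ι → R} (hF : Function.Surjective fun v i ↦ residue R (F v i)) :
    Function.Surjective F := by
  classical
  cases nonempty_fintype ι
  have top_le : (⊤ : Submodule R (ι → R)) ≤ LinearMap.range F ⊔ maximalIdeal R • ⊤ := fun w _ ↦ by
    obtain ⟨v, hv⟩ := hF fun i ↦ residue R (w i)
    have hmem : w - F v ∈ (maximalIdeal R • ⊤ : Submodule R (ι → R)) := by
      rw [pi_eq_sum_univ' (w - F v)]
      refine Submodule.sum_mem _ fun i _ ↦ Submodule.smul_mem_smul ?_ Submodule.mem_top
      rw [← residue_eq_zero_iff, Pi.sub_apply, map_sub, sub_eq_zero]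
      exact (congr_fun hv i).symm
    exact Submodule.mem_sup.mpr ⟨F v, ⟨v, rfl⟩, _, hmem, add_sub_cancel _ _⟩
  exact LinearMap.range_eq_top.mp <| top_le_iff.mp <|
    Submodule.le_of_le_smul_of_le_jacobson_bot Finite.fg_top (maximalIdeal_le_jacobson _) top_le

end Nakayama

section LocalRing

variable {R M : Type*} [CommRing R] [IsLocalRing R] [AddCommGroup M] [Module R M]

lemma isAtom_span_singleton_of_maximalIdeal_smul {s : M} (hs : s ≠ 0)
    (hsmul : ∀ r ∈ maximalIdeal R, r • s = 0) : IsAtom (Submodule.span R {s}) := by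
  refine ⟨by simpa using hs, fun N hN ↦ ?_⟩
  by_contra hN_ne
  obtain ⟨v, hvN, hv⟩ := N.ne_bot_iff.mp hN_ne
  obtain ⟨r, rfl⟩ := Submodule.mem_span_singleton.mp (hN.le hvN)
  have hr : IsUnit r := notMem_maximalIdeal.mp fun hr ↦ hv (hsmul r hr)
  have hsN : s ∈ N := (N.smul_mem_iff_of_isUnit hr).mp hvN
  exact hN.not_ge ((Submodule.span_singleton_le_iff_mem s N).mpr hsN)

lemma exists_ne_zero_maximalIdeal_smul_eq_zero (hnil : IsNilpotent (maximalIdeal R))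
    {N : Submodule R M} (hN : N ≠ ⊥) : ∃ s ∈ N, s ≠ 0 ∧ ∀ r ∈ maximalIdeal R, r • s = 0 := by
  obtain ⟨n, hn⟩ := hnil
  have pow_smul_eq_bot : maximalIdeal R ^ n • N = ⊥ := by simp [hn]
  clear hn
  induction n generalizing N with
  | zero => exact absurd (by simpa using pow_smul_eq_bot) hN
  | succ n ih =>
    by_cases hmN : maximalIdeal R • N = ⊥
    · obtain ⟨s, hsN, hs⟩ := N.ne_bot_iff.mp hN
      refine ⟨s, hsN, hs, fun r hr ↦ ?_⟩
      simpa [hmN] using Submodule.smul_mem_smul hr hsN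
    · rw [pow_succ, Submodule.mul_smul] at pow_smul_eq_bot
      obtain ⟨s, hsN, hs⟩ := ih hmN pow_smul_eq_bot
      exact ⟨s, Submodule.smul_le_right hsN, hs⟩

lemma isAtomic_submodule_of_isNilpotent_maximalIdeal (hnil : IsNilpotent (maximalIdeal R)) :
    IsAtomic (Submodule R M) where
  eq_bot_or_exists_atom_le N := or_iff_not_imp_left.mpr fun hN ↦ by
    obtain ⟨s, hsN, hs, hsmul⟩ := exists_ne_zero_maximalIdeal_smul_eq_zero hnil hN
    exact ⟨_, isAtom_span_singleton_of_maximalIdeal_smul hs hsmul,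
      (Submodule.span_singleton_le_iff_mem s N).mpr hsN⟩

lemma exists_residueField_linearMap_range_eq {N : Submodule R M} (hN : IsAtom N) :
    ∃ ι : ResidueField R →ₗ[R] M, Function.Injective ι ∧ LinearMap.range ι = N := by
  obtain ⟨P, hP, ⟨e⟩⟩ := isSimpleModule_iff_quot_maximal.mp (isSimpleModule_iff_isAtom.mpr hN)
  obtain rfl := eq_maximalIdeal hP
  let ε : ResidueField R ≃ₗ[R] N := e.symm
  exact ⟨N.subtype ∘ₗ ε.toLinearMap, N.injective_subtype.comp ε.injective, by
    rw [LinearMap.range_comp, LinearEquiv.range, Submodule.map_subtype_top]⟩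

lemma residueField_linearMap_residue (ι : ResidueField R →ₗ[R] M) (r : R) :
    ι (residue R r) = r • ι 1 := by
  rw [← map_smul, Algebra.smul_def, mul_one, ResidueField.algebraMap_eq]

lemma range_residueField_linearMap (ι : ResidueField R →ₗ[R] M) :
    LinearMap.range ι = Submodule.span R {ι 1} := by
  ext v
  rw [LinearMap.mem_range, Submodule.mem_span_singleton, residue_surjective.exists]
  simp only [residueField_linearMap_residue]

lemma one_tmul_residueField_eq_zero_iff {v : M} :
    (1 : ResidueField R) ⊗ₜ[R] v = 0 ↔ v ∈ (maximalIdeal R • ⊤ : Submodule R M) := by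
  rw [← LinearMap.ker_tensorProductMk]
  exact Iff.rfl

lemma mem_maximalIdeal_smul_top_of_forall_apply_eq_zero {v : M}
    (hv : ∀ β : M →ₗ[R] ResidueField R, β v = 0) : v ∈ (maximalIdeal R • ⊤ : Submodule R M) := by
  rw [← one_tmul_residueField_eq_zero_iff, ← forall_dual_apply_eq_zero_iff (ResidueField R)]
  exact fun β ↦ hv ((LinearMap.liftBaseChangeEquiv _).symm β)

lemma mem_maximalIdeal_smul_top_of_forall_dual_apply_mem {I A : Ideal R} (hA : IsAtom A)
    (hIA : Disjoint I A) {v : M} (hv : ∀ f : Dual R M, f v ∈ I) :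
    v ∈ (maximalIdeal R • ⊤ : Submodule R M) := by
  obtain ⟨σ, σ_inj, rfl⟩ := exists_residueField_linearMap_range_eq hA
  refine mem_maximalIdeal_smul_top_of_forall_apply_eq_zero fun β ↦ σ_inj ?_
  rw [map_zero]
  exact Submodule.disjoint_def.mp hIA _ (hv (σ ∘ₗ β)) ⟨β v, rfl⟩

lemma exists_forall_eq_residue_of_mem_smul_top {J : Ideal R} {ι : ResidueField R →ₗ[R] R}
    (hι : Function.Injective ι) (hιJ : Disjoint (LinearMap.range ι) J)
    (hsup : LinearMap.range ι ⊔ J = maximalIdeal R) {φ : Dual R M → ResidueField R} {v : M}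
    (hv : v ∈ (maximalIdeal R • ⊤ : Submodule R M)) (hφ : ∀ f : Dual R M, f v = ι (φ f)) :
    ∃ u : M, ∀ f : Dual R M, φ f = residue R (f u) := by
  rw [← hsup, Submodule.sup_smul, range_residueField_linearMap, Ideal.submodule_span_eq,
    Submodule.ideal_span_singleton_smul] at hv
  obtain ⟨_, ⟨u, -, rfl⟩, w, hw, rfl⟩ := Submodule.mem_sup.mp hv
  refine ⟨u, fun f ↦ hι <| sub_eq_zero.mp <| Submodule.disjoint_def.mp hιJ _ ?_ ?_⟩
  · exact sub_mem (LinearMap.mem_range_self ι _) (LinearMap.mem_range_self ι _)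
  · have sub_eq : ι (φ f) - ι (residue R (f u)) = f w := by
      simp [← hφ, residueField_linearMap_residue, mul_comm]
    rw [sub_eq]
    simpa using Submodule.smul_top_le_comap_smul_top J f hw

lemma exists_forall_eq_residue_dual_apply [IsReflexive R M] {I J A : Ideal R} (hI : IsAtom I)
    (hA : IsAtom A) (hAJ : A ≤ J) (hIJ : Disjoint I J) (hsup : I ⊔ J = maximalIdeal R)
    (φ : Dual R M →ₗ[R] ResidueField R) : ∃ u : M, ∀ f : Dual R M, φ f = residue R (f u) := by
  obtain ⟨ι, ι_inj, ι_range⟩ := exists_residueField_linearMap_range_eq hI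
  obtain ⟨e, he⟩ := (bijective_dual_eval R M).surjective (ι ∘ₗ φ)
  have apply_e (f : Dual R M) : f e = ι (φ f) := LinearMap.congr_fun he f
  have he_mem : e ∈ (maximalIdeal R • ⊤ : Submodule R M) :=
    mem_maximalIdeal_smul_top_of_forall_dual_apply_mem hA (hIJ.mono_right hAJ) fun f ↦ by
      rw [apply_e, ← ι_range]
      exact LinearMap.mem_range_self ι _
  subst ι_range
  exact exists_forall_eq_residue_of_mem_smul_top ι_inj hIJ hsup he_mem apply_e

lemma exists_dual_residue_eq [IsReflexive R M]
    {I J A : Ideal R} (hI : IsAtom I) (hA : IsAtom A) (hAJ : A ≤ J) (hIJ : Disjoint I J)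
    (hsup : I ⊔ J = maximalIdeal R) (β : M →ₗ[R] ResidueField R) :
    ∃ f : Dual R M, ∀ v, β v = residue R (f v) := by
  obtain ⟨f, hf⟩ := exists_forall_eq_residue_dual_apply hI hA hAJ hIJ hsup
    (β ∘ₗ (evalEquiv R M).symm.toLinearMap)
  refine ⟨f, fun v ↦ ?_⟩
  have hfv := hf (evalEquiv R M v)
  rwa [LinearMap.comp_apply, LinearEquiv.coe_coe, LinearEquiv.symm_apply_apply] at hfv

lemma finite_residueField_tensorProduct
    (hdual : ∀ φ : Dual R M →ₗ[R] ResidueField R, ∃ u : M, ∀ f, φ f = residue R (f u))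
    (hlift : ∀ β : M →ₗ[R] ResidueField R, ∃ f : Dual R M, ∀ v, β v = residue R (f v)) :
    Module.Finite (ResidueField R) (ResidueField R ⊗[R] M) := by
  let k := ResidueField R
  let reduction : Dual R M →ₗ[R] Dual k (k ⊗[R] M) :=
    (LinearMap.liftBaseChangeEquiv k).toLinearMap.restrictScalars R ∘ₗ
      LinearMap.compRight R (Algebra.linearMap R k)
  have reduction_tmul (f : Dual R M) (v : M) : reduction f (1 ⊗ₜ v) = residue R (f v) := by
    simp [reduction, k, ResidueField.algebraMap_eq]
  have : IsReflexive k (k ⊗[R] M) := by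
    refine ⟨eval_apply_injective k, fun Ψ ↦ ?_⟩
    obtain ⟨u, hu⟩ := hdual (Ψ.restrictScalars R ∘ₗ reduction)
    refine ⟨1 ⊗ₜ u, LinearMap.ext fun B ↦ ?_⟩
    obtain ⟨β, rfl⟩ := (LinearMap.liftBaseChangeEquiv k).surjective B
    obtain ⟨f, hf⟩ := hlift β
    have reduction_f : reduction f = LinearMap.liftBaseChangeEquiv k β :=
      congrArg (LinearMap.liftBaseChangeEquiv k) (LinearMap.ext fun v ↦ (hf v).symm)
    rw [← reduction_f, Dual.eval_apply, reduction_tmul]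
    exact (hu f).symm
  infer_instance

lemma finite_and_free_of_finite_residueField_tensorProduct
    (hnil : IsNilpotent (maximalIdeal R)) [Module.Finite (ResidueField R) (ResidueField R ⊗[R] M)]
    (hlift : ∀ β : M →ₗ[R] ResidueField R, ∃ f : Dual R M, ∀ v, β v = residue R (f v)) :
    Module.Finite R M ∧ Module.Free R M := by
  let b := finBasis (ResidueField R) (ResidueField R ⊗[R] M)
  choose f hf using fun i ↦ hlift ((LinearMap.liftBaseChangeEquiv _).symm (b.coord i))
  let F := LinearMap.pi f
  have residue_F : (fun v i ↦ residue R (F v i)) =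
      b.equivFun ∘ TensorProduct.mk R (ResidueField R) M 1 :=
    funext₂ fun v i ↦ (hf i v).symm
  have F_surj : Function.Surjective F := by
    refine surjective_of_surjective_residue_comp ?_
    rw [residue_F]
    exact b.equivFun.surjective.comp (TensorProduct.mk_surjective R M _ residue_surjective)
  have ker_F_le : LinearMap.ker F ≤ maximalIdeal R • ⊤ := fun v hv ↦ by
    rw [← one_tmul_residueField_eq_zero_iff, ← b.equivFun.map_eq_zero_iff]
    refine (congr_fun residue_F v).symm.trans ?_
    rw [LinearMap.mem_ker.mp hv]
    exact funext fun _ ↦ map_zero _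
  let e := LinearEquiv.ofBijective F ⟨injective_of_ker_le_smul_top hnil F_surj ker_F_le, F_surj⟩
  exact ⟨.equiv e.symm, .of_equiv e.symm⟩

theorem stmt8_general (hnil : IsNilpotent (maximalIdeal R)) {I J : Ideal R} (hI : IsAtom I)
    (hJ : J ≠ ⊥) (hIJ : Disjoint I J) (hsup : I ⊔ J = maximalIdeal R) [IsReflexive R M] :
    Module.Finite R M ∧ Module.Free R M := by
  have := isAtomic_submodule_of_isNilpotent_maximalIdeal (M := R) hnil
  obtain ⟨A, hA, hAJ⟩ := (eq_bot_or_exists_atom_le J).resolve_left hJ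
  have hlift := exists_dual_residue_eq (M := M) hI hA hAJ hIJ hsup
  have := finite_residueField_tensorProduct
    (exists_forall_eq_residue_dual_apply hI hA hAJ hIJ hsup) hlift
  exact finite_and_free_of_finite_residueField_tensorProduct hnil hlift

end LocalRing

namespace RamrasRing

open MvPolynomial

/-- The class `x` of `X` in `ℚ[X,Y]/(X², XY, Y³)`. -/
noncomputable def x : RamrasRing := Ideal.Quotient.mk _ (X 0)

/-- The class `y` of `Y` in `ℚ[X,Y]/(X², XY, Y³)`. -/
noncomputable def y : RamrasRing := Ideal.Quotient.mk _ (X 1)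

lemma x_mul_x : x * x = 0 := by
  rw [x, ← map_mul, Ideal.Quotient.eq_zero_iff_mem, ← pow_two]
  exact Ideal.subset_span (by simp)

lemma x_mul_y : x * y = 0 := by
  rw [x, y, ← map_mul, Ideal.Quotient.eq_zero_iff_mem]
  exact Ideal.subset_span (by simp)

lemma y_pow_three : y ^ 3 = 0 := by
  rw [y, ← map_pow, Ideal.Quotient.eq_zero_iff_mem]
  exact Ideal.subset_span (by simp)

section Lift

variable {A : Type*} [CommRing A] [Algebra ℚ A] {a b : A}

/-- The universal property of `ℚ[X,Y]/(X², XY, Y³)`: the algebra homomorphism sending `x` to `a`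
and `y` to `b`. -/
noncomputable def lift (ha : a ^ 2 = 0) (hab : a * b = 0) (hb : b ^ 3 = 0) :
    RamrasRing →ₐ[ℚ] A :=
  Ideal.Quotient.liftₐ _ (aeval ![a, b]) fun _ hp ↦
    (Ideal.span_le (I := RingHom.ker (aeval ![a, b]))).mpr
      (by rintro _ (rfl | rfl | rfl) <;> simp [RingHom.mem_ker, ha, hab, hb]) hp

variable (ha : a ^ 2 = 0) (hab : a * b = 0) (hb : b ^ 3 = 0)

@[simp]
lemma lift_x : lift ha hab hb x = a := by
  change aeval ![a, b] (X 0) = a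
  simp

@[simp]
lemma lift_y : lift ha hab hb y = b := by
  change aeval ![a, b] (X 1) = b
  simp

end Lift

lemma algHom_ext {A : Type*} [Semiring A] [Algebra ℚ A] {φ ψ : RamrasRing →ₐ[ℚ] A}
    (hx : φ x = ψ x) (hy : φ y = ψ y) : φ = ψ :=
  Ideal.Quotient.algHom_ext _ <| MvPolynomial.algHom_ext <| Fin.forall_fin_two.mpr ⟨hx, hy⟩

/-- The augmentation `ℚ[X,Y]/(X², XY, Y³) → ℚ`, evaluation at the origin. -/
noncomputable def augmentation : RamrasRing →ₐ[ℚ] ℚ :=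
  lift (a := 0) (b := 0) (by simp) (by simp) (by simp)

/-- The quotient `ℚ[X,Y]/(X², XY, Y³) → ℚ[ε]` by `y`. -/
noncomputable def modY : RamrasRing →ₐ[ℚ] DualNumber ℚ :=
  lift (a := DualNumber.eps) (b := 0) (by simp [pow_two]) (by simp) (by simp)

@[simp]
lemma modY_x : modY x = DualNumber.eps := lift_x ..

@[simp]
lemma modY_y : modY y = 0 := lift_y ..

lemma x_ne_zero : x ≠ 0 := fun hx ↦ by
  have : modY x = 0 := by rw [hx, map_zero]
  simpa using congrArg TrivSqZeroExt.snd this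

lemma y_ne_zero : y ≠ 0 := fun hy ↦ by
  let φ := lift (a := 0) (b := (DualNumber.eps : DualNumber ℚ)) (by simp) (by simp)
    (by simp [pow_succ])
  have : φ y = 0 := by rw [hy, map_zero]
  simpa [φ] using congrArg TrivSqZeroExt.snd this

lemma fst_modY (r : RamrasRing) : (modY r).fst = augmentation r := by
  have : (TrivSqZeroExt.fstHom ℚ ℚ ℚ).comp modY = augmentation :=
    algHom_ext (by simp [augmentation]) (by simp [augmentation])
  exact DFunLike.congr_fun this r

lemma ker_augmentation : RingHom.ker augmentation = Ideal.span {x} ⊔ Ideal.span {y} := by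
  refine le_antisymm (fun r hr ↦ ?_) ?_
  · let π := Ideal.Quotient.mkₐ ℚ (Ideal.span {x} ⊔ Ideal.span {y})
    have hπ : π = (Algebra.ofId ℚ _).comp augmentation := by
      refine algHom_ext ?_ ?_
      · simpa [π, augmentation] using Ideal.Quotient.eq_zero_iff_mem.mpr
          (Ideal.mem_sup_left (Ideal.mem_span_singleton_self x))
      · simpa [π, augmentation] using Ideal.Quotient.eq_zero_iff_mem.mpr
          (Ideal.mem_sup_right (Ideal.mem_span_singleton_self y))
    refine Ideal.Quotient.eq_zero_iff_mem.mp ((DFunLike.congr_fun hπ r).trans ?_)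
    rw [AlgHom.comp_apply, (RingHom.mem_ker).mp hr, map_zero]
  · simp [RingHom.mem_ker, augmentation]

lemma isMaximal_span_x_sup_span_y : (Ideal.span {x} ⊔ Ideal.span {y}).IsMaximal := by
  rw [← ker_augmentation]
  exact RingHom.ker_isMaximal_of_surjective _ fun q ↦ ⟨algebraMap ℚ _ q, by simp⟩

lemma span_x_sup_span_y_le_nilradical :
    Ideal.span {x} ⊔ Ideal.span {y} ≤ nilradical RamrasRing := by
  rw [sup_le_iff, Ideal.span_singleton_le_iff_mem, Ideal.span_singleton_le_iff_mem]
  exact ⟨⟨2, (pow_two x).trans x_mul_x⟩, ⟨3, y_pow_three⟩⟩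

instance : IsLocalRing RamrasRing := by
  have : Nontrivial RamrasRing := ⟨x, 0, x_ne_zero⟩
  have nilradical_eq := isMaximal_span_x_sup_span_y.eq_of_le
    (by simp [nilradical, Ideal.radical_eq_top]) span_x_sup_span_y_le_nilradical
  have : (nilradical RamrasRing).IsMaximal := nilradical_eq ▸ isMaximal_span_x_sup_span_y
  exact .of_isMaximal_nilradical RamrasRing

lemma span_x_sup_span_y : Ideal.span {x} ⊔ Ideal.span {y} = maximalIdeal RamrasRing :=
  eq_maximalIdeal isMaximal_span_x_sup_span_y

lemma isNilpotent_maximalIdeal : IsNilpotent (maximalIdeal RamrasRing) := by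
  rw [← span_x_sup_span_y]
  have fg : (Ideal.span {x} ⊔ Ideal.span {y}).FG :=
    (Submodule.fg_span_singleton x).sup (Submodule.fg_span_singleton y)
  exact fg.isNilpotent_iff_le_nilradical.mpr span_x_sup_span_y_le_nilradical

lemma maximalIdeal_mul_x {r : RamrasRing} (hr : r ∈ maximalIdeal RamrasRing) : r * x = 0 := by
  rw [← span_x_sup_span_y, ← Ideal.span_union, Set.singleton_union, Ideal.mem_span_pair] at hr
  obtain ⟨a, b, rfl⟩ := hr
  linear_combination a * x_mul_x + b * x_mul_y

lemma isAtom_span_x : IsAtom (Ideal.span {x}) :=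
  isAtom_span_singleton_of_maximalIdeal_smul x_ne_zero fun _ ↦ maximalIdeal_mul_x

lemma disjoint_span_x_span_y : Disjoint (Ideal.span {x}) (Ideal.span {y}) := by
  refine Submodule.disjoint_def.mpr fun r hrx hry ↦ ?_
  obtain ⟨a, rfl⟩ := Ideal.mem_span_singleton'.mp hrx
  obtain ⟨b, hb⟩ := Ideal.mem_span_singleton'.mp hry
  have augmentation_a : augmentation a = 0 := by
    simpa [fst_modY] using congrArg (fun c ↦ (modY c).snd) hb.symm
  refine maximalIdeal_mul_x ?_
  rwa [← span_x_sup_span_y, ← ker_augmentation]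

end RamrasRing

/-- Let `R = ℚ[X,Y]/(X², XY, Y³)`. Then every reflexive `R`-module is
finitely generated and free. -/
theorem stmt8 (M : Type) [AddCommGroup M] [Module RamrasRing M]
    (h : Module.IsReflexive RamrasRing M) :
    Module.Finite RamrasRing M ∧ Module.Free RamrasRing M :=
  stmt8_general RamrasRing.isNilpotent_maximalIdeal RamrasRing.isAtom_span_x
    (by simpa using RamrasRing.y_ne_zero) RamrasRing.disjoint_span_x_span_y
    RamrasRing.span_x_sup_span_y
end
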